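/- Consider the m-state lamplighter chain on the discrete cycle Z_n, started from the state in which the lamplighter is at a fixed vertex x and all lamps are in state 0. There is an absolute constant c > 0 such that for every a > 0 and t = a·n², the distribution μ_t at time t satisfies 1 + Var_π(μ_t/π) ≥ exp(−c·a)·m^{n/2}, where π is the uniform stationary distribution. Consequently, the L² mixing time satisfies τ₂ = Ω(n²·log N), where N = m^n. -/

import Mathlib

open Finset
open scoped Classical

namespace Paper

variable {X : Type} [Fintype X] [DecidableEq X]

/-- `P` is a stochastic matrix. -/
def IsStoch (P : Matrix X X ℝ) : Prop :=
  (∀ x y, 0 ≤ P x y) ∧ ∀ x, ∑ y, P x y = 1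

/-- The uniform distribution is stationary for `P` (all columns sum to 1). -/
def UnifStationary (P : Matrix X X ℝ) : Prop := ∀ y, ∑ x, P x y = 1

/-- Irreducibility of the chain. -/
def Irred (P : Matrix X X ℝ) : Prop := ∀ x y, ∃ n, 0 < (P ^ n) x y

/-- Probability of a trajectory `ω 0, ω 1, …, ω n` under initial distribution `μ`. -/
noncomputable def pathProb (P : Matrix X X ℝ) (μ : X → ℝ) {n : ℕ}
    (ω : Fin (n + 1) → X) : ℝ :=
  μ (ω 0) * ∏ i : Fin n, P (ω i.castSucc) (ω i.succ)

/-- Probability of an event determined by the trajectory up to time `n`. -/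
noncomputable def prPath (P : Matrix X X ℝ) (μ : X → ℝ) (n : ℕ)
    (E : (Fin (n + 1) → X) → Prop) : ℝ :=
  ∑ ω : Fin (n + 1) → X, if E ω then pathProb P μ ω else 0

/-- Expectation of a functional of the trajectory up to time `n`. -/
noncomputable def expPath (P : Matrix X X ℝ) (μ : X → ℝ) (n : ℕ)
    (f : (Fin (n + 1) → X) → ℝ) : ℝ :=
  ∑ ω : Fin (n + 1) → X, pathProb P μ ω * f ω

/-- Point mass at `x`. -/
def delta (x : X) : X → ℝ := fun z => if z = x then 1 else 0

/-- Expected hitting time `E_x[T_y]`, via `E[T] = ∑_{n ≥ 0} Pr(T > n)`. -/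
noncomputable def hitExp (P : Matrix X X ℝ) (x y : X) : ℝ :=
  (∑' n : ℕ, ENNReal.ofReal (prPath P (delta x) n (fun ω => ∀ i, ω i ≠ y))).toReal

/-- Maximal expected hitting time `H = max_{x,y} E_x[T_y]`. -/
noncomputable def maxHit (P : Matrix X X ℝ) : ℝ := ⨆ x, ⨆ y, hitExp P x y

/-- Relaxation time: `max 1/(1-|λ|)` over nontrivial eigenvalues `λ` of `P`. -/
noncomputable def Trel (P : Matrix X X ℝ) : ℝ :=
  sSup ((fun l : ℝ => 1 / (1 - |l|)) '' (spectrum ℝ P \ {1}))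

/-- The set of states not visited by the trajectory `ω` (up to its time horizon). -/
noncomputable def unvisited {n : ℕ} (ω : Fin (n + 1) → X) : Finset X :=
  Finset.univ.filter fun x => ∀ i, ω i ≠ x

/-- `Pr_x(T⁺_x ≥ s)`: the chain started at `x` does not return to `x`
at any time `i` with `1 ≤ i < s`. -/
noncomputable def prReturnGE (P : Matrix X X ℝ) (x : X) (s : ℝ) : ℝ :=
  prPath P (delta x) ⌈s⌉₊
    (fun ω => ∀ i : Fin (⌈s⌉₊ + 1), 1 ≤ (i : ℕ) → ((i : ℕ) : ℝ) < s → ω i ≠ x)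

/-- Separation distance at time `n` from state `x`. -/
noncomputable def sep (P : Matrix X X ℝ) (pi : X → ℝ) (x : X) (n : ℕ) : ℝ :=
  ⨆ y, (1 - (P ^ n) x y / pi y)

/-- Relative entropy `D(μ ‖ pi)` (with `0 log 0 = 0`). -/
noncomputable def relEnt (μ pi : X → ℝ) : ℝ := ∑ x, μ x * Real.log (μ x / pi x)

/-- Total variation distance `d_tv(μ, pi) = ∑_{y : μ y < pi y} (pi y - μ y)`. -/
noncomputable def dtv (μ pi : X → ℝ) : ℝ :=
  ∑ y ∈ Finset.univ.filter (fun y => μ y < pi y), (pi y - μ y)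

/-- Entropy decay (mixing) time. -/
noncomputable def tauEnt (P : Matrix X X ℝ) (pi : X → ℝ) (ε : ℝ) : ℕ :=
  sInf {n' | ∀ n ≥ n', ∀ x, relEnt ((P ^ n) x) pi ≤ ε}

/-- Separation mixing time. -/
noncomputable def tauSep (P : Matrix X X ℝ) (pi : X → ℝ) (ε : ℝ) : ℕ :=
  sInf {n' | ∀ n ≥ n', ∀ x, sep P pi x n ≤ ε}

/-- Total variation mixing time. -/
noncomputable def tauTV (P : Matrix X X ℝ) (pi : X → ℝ) (ε : ℝ) : ℕ :=
  sInf {n' | ∀ n ≥ n', ∀ x, dtv ((P ^ n) x) pi ≤ ε}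

/-- `L²(pi)` distance of `Pᵗ(x,·)` from `pi`. -/
noncomputable def chiDist (P : Matrix X X ℝ) (pi : X → ℝ) (t : ℕ) (x : X) : ℝ :=
  Real.sqrt (∑ y, ((P ^ t) x y / pi y - 1) ^ 2 * pi y)

/-- `L²` mixing time. -/
noncomputable def tau2 (P : Matrix X X ℝ) (pi : X → ℝ) : ℕ :=
  sInf {t | ∀ x, chiDist P pi t x ≤ 1 / 4}

/-- Uniform distribution on a finite type. -/
noncomputable def unif (Y : Type) [Fintype Y] : Y → ℝ := fun _ => (Fintype.card Y : ℝ)⁻¹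

/-- The `m`-state lamplighter chain over a base chain `Pb`:
the lamp at the current position is randomized, the lamplighter moves one step
of the base chain, and the lamp at the new position is randomized. -/
noncomputable def lampChain {V : Type} [Fintype V] [DecidableEq V]
    (Pb : Matrix V V ℝ) (m : ℕ) :
    Matrix ((V → Fin m) × V) ((V → Fin m) × V) ℝ :=
  fun p q =>
    if ∀ z, z ≠ p.2 → z ≠ q.2 → q.1 z = p.1 z then
      Pb p.2 q.2 * ((m : ℝ)⁻¹) ^ (({p.2, q.2} : Finset V).card)
    else 0

/-- Simple random walk on a `d`-regular graph. -/
noncomputable def srw {V : Type} [Fintype V] [DecidableEq V]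
    (G : SimpleGraph V) (d : ℕ) : Matrix V V ℝ :=
  fun x y => if G.Adj x y then (d : ℝ)⁻¹ else 0

/-- Lazy simple random walk on the discrete cycle `ZMod n`. -/
noncomputable def cycleWalk (n : ℕ) [NeZero n] : Matrix (ZMod n) (ZMod n) ℝ :=
  fun x y => (if y = x then 1 / 2 else 0) + (if y = x + 1 then 1 / 4 else 0) +
    (if y = x - 1 then 1 / 4 else 0)

/-!
Let `B` be the arc of at most `n / 2` vertices around `x₀`. As long as the walk stays in `B`, the
lamps outside `B` keep their initial values, so the chain sits in a set of at most `m ^ (n / 2) * n`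
states, and by Cauchy–Schwarz a set of relative size `ρ` and probability `p` forces
`1 + Var_π(μ/π) ≥ p² / ρ`. To bound `p` below, take a function `φ` on the cycle
with `0 ≤ φ ≤ 1_B` and `λ φ ≤ P φ`. Its cutoff `ψ` to the configurations with unchanged lamps
outside `B` satisfies the same inequality for the lamplighter chain `Q`, and iterating it gives
`λᵗ φ(x₀) ≤ (Qᵗ ψ)(0, x₀) ≤ p`. A cosine vanishing at the ends of `B` is such a function, with
`λ = 1 - O(n⁻²)`.

For the mixing time one also needs that `τ₂` is attained, since the infimum defining it would be `0`
on the empty set: the chain is doubly stochastic and primitive, hence converges to uniform.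
-/

open Matrix Relation

section NonnegativeMatrices

theorem mulVec_le_mulVec_of_nonneg {ι κ : Type*} [Fintype κ] {A : Matrix ι κ ℝ}
    (hA : ∀ i j, 0 ≤ A i j) {F G : κ → ℝ} (hFG : F ≤ G) : A *ᵥ F ≤ A *ᵥ G :=
  fun i => dotProduct_le_dotProduct_of_nonneg_left hFG (hA i)

theorem mul_apply_pos {ι κ τ : Type*} [Fintype κ] {A : Matrix ι κ ℝ} {B : Matrix κ τ ℝ}
    (hA : ∀ i j, 0 ≤ A i j) (hB : ∀ j k, 0 ≤ B j k) {i : ι} {j : κ} {k : τ}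
    (hij : 0 < A i j) (hjk : 0 < B j k) : 0 < (A * B) i k := by
  rw [mul_apply]
  exact sum_pos' (fun l _ => mul_nonneg (hA i l) (hB l k)) ⟨j, mem_univ j, mul_pos hij hjk⟩

variable {P : Matrix X X ℝ}

theorem pow_smul_le_pow_mulVec (hP : ∀ x y, 0 ≤ P x y) {F : X → ℝ} {l : ℝ} (hl : 0 ≤ l)
    (hF : l • F ≤ P *ᵥ F) (t : ℕ) : l ^ t • F ≤ P ^ t *ᵥ F := by
  induction t with
  | zero => simp
  | succ t ih =>
    calc l ^ (t + 1) • F = l ^ t • l • F := by rw [pow_succ, mul_smul]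
      _ ≤ l ^ t • (P *ᵥ F) := smul_le_smul_of_nonneg_left hF (pow_nonneg hl t)
      _ = P *ᵥ (l ^ t • F) := (mulVec_smul P _ F).symm
      _ ≤ P *ᵥ (P ^ t *ᵥ F) := mulVec_le_mulVec_of_nonneg hP ih
      _ = P ^ (t + 1) *ᵥ F := by rw [mulVec_mulVec, pow_succ']

theorem pow_mul_le_sum_pow_apply (hP : ∀ x y, 0 ≤ P x y) {F : X → ℝ} {l : ℝ} (hl : 0 ≤ l)
    (hF : l • F ≤ P *ᵥ F) {S : Finset X} (hFS : F ≤ (S : Set X).indicator 1) (t : ℕ) (x : X) :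
    l ^ t * F x ≤ ∑ y ∈ S, (P ^ t) x y :=
  calc l ^ t * F x ≤ (P ^ t *ᵥ F) x := pow_smul_le_pow_mulVec hP hl hF t x
    _ ≤ (P ^ t *ᵥ (S : Set X).indicator 1) x :=
      mulVec_le_mulVec_of_nonneg (pow_apply_nonneg hP t) hFS x
    _ = ∑ y ∈ S, (P ^ t) x y := by
      simp [mulVec, dotProduct, Set.indicator_apply]

theorem exists_pow_apply_pos_iff_reflTransGen (hP : ∀ x y, 0 ≤ P x y) {x y : X} :
    (∃ k, 0 < (P ^ k) x y) ↔ ReflTransGen (fun a b => 0 < P a b) x y := by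
  constructor
  · rintro ⟨k, hk⟩
    induction k generalizing y with
    | zero =>
      obtain rfl : x = y := by
        by_contra hxy
        simp [one_apply_ne hxy] at hk
      exact .refl
    | succ k ih =>
      rw [pow_succ, mul_apply] at hk
      obtain ⟨z, -, hz⟩ := exists_lt_of_sum_lt (s := univ) (f := fun _ => (0 : ℝ))
        (g := fun z => (P ^ k) x z * P z y) (by simpa using hk)
      exact (ih (pos_of_mul_pos_left hz (hP z y))).tail
        (pos_of_mul_pos_right hz (pow_apply_nonneg hP k x z))
  · intro hxy
    induction hxy with
    | refl => exact ⟨0, by simp⟩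
    | tail _ hbc ih =>
      obtain ⟨k, hk⟩ := ih
      exact ⟨k + 1, pow_succ P k ▸ mul_apply_pos (pow_apply_nonneg hP k) hP hk hbc⟩

theorem pow_apply_pos_of_le (hP : ∀ x y, 0 ≤ P x y) (hdiag : ∀ x, 0 < P x x) {x y : X} {k l : ℕ}
    (hkl : k ≤ l) (hk : 0 < (P ^ k) x y) : 0 < (P ^ l) x y := by
  induction l, hkl using Nat.le_induction with
  | base => exact hk
  | succ l _ ih =>
    rw [pow_succ]
    exact mul_apply_pos (pow_apply_nonneg hP l) hP ih (hdiag y)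

theorem Irred.isPrimitive (hirr : Irred P) (hP : ∀ x y, 0 ≤ P x y) (hdiag : ∀ x, 0 < P x x) :
    P.IsPrimitive := by
  choose K hK using hirr
  refine ⟨hP, ∑ p : X × X, K p.1 p.2 + 1, Nat.succ_pos _, fun x y => ?_⟩
  have hle : K x y ≤ ∑ p : X × X, K p.1 p.2 :=
    single_le_sum (f := fun p : X × X => K p.1 p.2) (fun _ _ => Nat.zero_le _) (mem_univ (x, y))
  exact pow_apply_pos_of_le hP hdiag (hle.trans (Nat.le_succ _)) (hK x y)

end NonnegativeMatrices

section ChiSquare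

variable {Y : Type} [Fintype Y] {μ : Y → ℝ}

/-- The `χ²`-divergence `Var_π(μ/π) = ‖μ/π - 1‖²_{2,π}` of `μ` from `pi`, for distributions given by
their weights. -/
noncomputable def chiSq (μ pi : Y → ℝ) : ℝ := ∑ x, pi x * (μ x / pi x - 1) ^ 2

theorem chiDist_eq_sqrt_chiSq (P : Matrix X X ℝ) (pi : X → ℝ) (t : ℕ) (x : X) :
    chiDist P pi t x = √(chiSq ((P ^ t) x) pi) := by
  simp only [chiDist, chiSq, mul_comm]

theorem card_ne_zero_of_sum_eq_one (hμ : ∑ x, μ x = 1) : (Fintype.card Y : ℝ) ≠ 0 := by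
  intro hcard
  have : IsEmpty Y := Fintype.card_eq_zero_iff.1 (Nat.cast_eq_zero.1 hcard)
  simp at hμ

theorem one_add_chiSq_unif (hμ : ∑ x, μ x = 1) :
    1 + chiSq μ (unif Y) = Fintype.card Y * ∑ x, μ x ^ 2 := by
  have hX : (Fintype.card Y : ℝ) ≠ 0 := card_ne_zero_of_sum_eq_one hμ
  have expand : ∀ x, unif Y x * (μ x / unif Y x - 1) ^ 2 =
      Fintype.card Y * μ x ^ 2 - 2 * μ x + (Fintype.card Y : ℝ)⁻¹ := by
    intro x
    simp only [unif]
    field_simp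
    ring
  simp only [chiSq, expand, sum_add_distrib, sum_sub_distrib, ← mul_sum, hμ, sum_const, card_univ,
    nsmul_eq_mul, mul_inv_cancel₀ hX]
  ring

theorem card_mul_sq_sum_le (hμ : ∑ x, μ x = 1) (S : Finset Y) :
    Fintype.card Y * (∑ x ∈ S, μ x) ^ 2 ≤ #S * (1 + chiSq μ (unif Y)) := by
  have hS : ∑ x ∈ S, μ x ^ 2 ≤ ∑ x, μ x ^ 2 :=
    sum_le_sum_of_subset_of_nonneg (subset_univ S) fun _ _ _ => sq_nonneg _
  calc Fintype.card Y * (∑ x ∈ S, μ x) ^ 2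
      ≤ Fintype.card Y * (#S * ∑ x ∈ S, μ x ^ 2) := by gcongr; exact sq_sum_le_card_mul_sum_sq
    _ ≤ Fintype.card Y * (#S * ∑ x, μ x ^ 2) := by gcongr
    _ = #S * (1 + chiSq μ (unif Y)) := by rw [one_add_chiSq_unif hμ]; ring

theorem sqrt_chiSq_unif_le (hμ : ∑ x, μ x = 1) {η : ℝ}
    (hη : ∀ x, 1 - η ≤ Fintype.card Y * μ x) : √(chiSq μ (unif Y)) ≤ Fintype.card Y * η := by
  set N : ℝ := (Fintype.card Y : ℝ)
  have hN : N ≠ 0 := card_ne_zero_of_sum_eq_one hμ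
  have hN1 : 1 ≤ N := Nat.one_le_cast.2 (Nat.pos_of_ne_zero (Nat.cast_ne_zero.1 hN))
  have sum_excess : ∑ x, (N * μ x - (1 - η)) = N * η := by
    rw [sum_sub_distrib, ← mul_sum, hμ, sum_const, card_univ, nsmul_eq_mul]
    ring
  have excess_nonneg : ∀ x, 0 ≤ N * μ x - (1 - η) := fun x => sub_nonneg.2 (hη x)
  have hη0 : 0 ≤ η :=
    nonneg_of_mul_nonneg_right (sum_excess ▸ sum_nonneg fun x _ => excess_nonneg x) (by linarith)
  have density_near_one : ∀ x, |N * μ x - 1| ≤ N * η := by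
    intro x
    have upper : N * μ x - (1 - η) ≤ N * η :=
      sum_excess ▸ single_le_sum (f := fun z => N * μ z - (1 - η))
        (fun z _ => excess_nonneg z) (mem_univ x)
    have hηN : η ≤ N * η := le_mul_of_one_le_left hη0 hN1
    exact abs_le.2 ⟨by linarith [hη x], by linarith⟩
  refine Real.sqrt_le_iff.2 ⟨by positivity, ?_⟩
  calc chiSq μ (unif Y) = ∑ x, N⁻¹ * (N * μ x - 1) ^ 2 := by
        simp only [chiSq, unif, div_inv_eq_mul, mul_comm (μ _), N]
    _ ≤ ∑ _x : Y, N⁻¹ * (N * η) ^ 2 :=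
        sum_le_sum fun x _ => mul_le_mul_of_nonneg_left
          (sq_le_sq' (abs_le.1 (density_near_one x)).1 (abs_le.1 (density_near_one x)).2)
          (by positivity)
    _ = (N * η) ^ 2 := by
        rw [sum_const, card_univ, nsmul_eq_mul, ← mul_assoc, mul_inv_cancel₀ hN, one_mul]

end ChiSquare

section Convergence

variable {P : Matrix X X ℝ}

theorem one_sub_pow_le_card_mul_pow_apply (hP : P ∈ doublyStochastic ℝ X) {δ : ℝ}
    (hδ : ∀ x y, δ ≤ P x y) (k : ℕ) (x y : X) :
    1 - (1 - Fintype.card X * δ) ^ k ≤ Fintype.card X * (P ^ k) x y := by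
  induction k generalizing x y with
  | zero =>
    rw [pow_zero, pow_zero, sub_self, one_apply]
    positivity
  | succ k ih =>
    set N : ℝ := (Fintype.card X : ℝ)
    set r := 1 - N * δ
    have sum_sub : ∑ z, (P x z - δ) = r := by
      rw [sum_sub_distrib, sum_row_of_mem_doublyStochastic hP, sum_const, card_univ, nsmul_eq_mul]
    have split : N * (P ^ (k + 1)) x y = ∑ z, (P x z - δ) * (N * (P ^ k) z y) + N * δ := by
      simp only [sub_mul, sum_sub_distrib, mul_left_comm _ N, ← mul_sum,
        sum_col_of_mem_doublyStochastic (pow_mem hP k), pow_succ' P, mul_apply]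
      ring
    have minorize : r * (1 - r ^ k) ≤ ∑ z, (P x z - δ) * (N * (P ^ k) z y) := by
      nth_rw 1 [← sum_sub]
      rw [sum_mul]
      exact sum_le_sum fun z _ => mul_le_mul_of_nonneg_left (ih z y) (sub_nonneg.2 (hδ x z))
    rw [split, pow_succ']
    linarith

theorem exists_chiDist_unif_le (hP : P ∈ doublyStochastic ℝ X) (hprim : P.IsPrimitive) {ε : ℝ}
    (hε : 0 < ε) : ∃ t, ∀ x, chiDist P (unif X) t x ≤ ε := by
  cases isEmpty_or_nonempty X
  · exact ⟨0, isEmptyElim⟩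
  obtain ⟨T, -, hT⟩ := hprim.exists_pos_pow
  obtain ⟨⟨a, b⟩, hab⟩ := Finite.exists_min fun p : X × X => (P ^ T) p.1 p.2
  have hN : (0 : ℝ) < Fintype.card X := Nat.cast_pos.2 Fintype.card_pos
  obtain ⟨k, hk⟩ := exists_pow_lt_of_lt_one (div_pos hε hN)
    (sub_lt_self 1 (mul_pos hN (hT a b)))
  have hPTk : (P ^ T) ^ k ∈ doublyStochastic ℝ X := pow_mem (pow_mem hP T) k
  refine ⟨T * k, fun x => ?_⟩
  rw [chiDist_eq_sqrt_chiSq, pow_mul]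
  refine (sqrt_chiSq_unif_le (sum_row_of_mem_doublyStochastic hPTk x)
    (one_sub_pow_le_card_mul_pow_apply (pow_mem hP T) (fun x y => hab (x, y)) k x)).trans ?_
  exact ((lt_div_iff₀' hN).1 hk).le

theorem chiSq_pow_tau2_le (hP : P ∈ doublyStochastic ℝ X) (hprim : P.IsPrimitive) (x : X) :
    chiSq ((P ^ tau2 P (unif X)) x) (unif X) ≤ 1 / 16 := by
  have hmem : chiDist P (unif X) (tau2 P (unif X)) x ≤ 1 / 4 :=
    Nat.sInf_mem (exists_chiDist_unif_le hP hprim (by norm_num)) x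
  rw [chiDist_eq_sqrt_chiSq, Real.sqrt_le_left (by norm_num)] at hmem
  linarith

end Convergence

section Lamplighter

variable {V : Type} [Fintype V] [DecidableEq V] {Pb : Matrix V V ℝ} {m : ℕ}

/-- The lamp configurations that agree with `f` outside `B`. -/
noncomputable def lampsAgreeOff (f : V → Fin m) (B : Finset V) : Finset (V → Fin m) :=
  univ.filter fun g => ∀ z ∉ B, g z = f z

theorem mem_lampsAgreeOff {f g : V → Fin m} {B : Finset V} :
    g ∈ lampsAgreeOff f B ↔ ∀ z ∉ B, g z = f z := by
  simp [lampsAgreeOff]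

theorem card_lampsAgreeOff (f : V → Fin m) (B : Finset V) : #(lampsAgreeOff f B) = m ^ #B := by
  have eq_piFinset :
      lampsAgreeOff f B = Fintype.piFinset fun z => if z ∈ B then univ else {f z} := by
    ext g
    simp only [mem_lampsAgreeOff, Fintype.mem_piFinset]
    refine forall_congr' fun z => ?_
    by_cases hz : z ∈ B <;> simp [hz]
  simp [eq_piFinset, Fintype.card_piFinset, apply_ite card]

theorem lampChain_apply (f g : V → Fin m) (x y : V) :
    lampChain Pb m (f, x) (g, y) =
      if g ∈ lampsAgreeOff f {x, y} then Pb x y * (m : ℝ)⁻¹ ^ #{x, y} else 0 := by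
  simp [lampChain, mem_lampsAgreeOff]

theorem sum_lampChain_apply (f : V → Fin m) (x y : V) :
    ∑ g, lampChain Pb m (f, x) (g, y) = Pb x y := by
  have hm : (m : ℝ) ≠ 0 := Nat.cast_ne_zero.2 (f x).pos.ne'
  simp only [lampChain_apply, sum_ite_mem, univ_inter, sum_const, card_lampsAgreeOff, nsmul_eq_mul,
    Nat.cast_pow]
  rw [mul_left_comm, ← mul_pow, mul_inv_cancel₀ hm, one_pow, mul_one]

theorem lampChain_nonneg (hPb : ∀ x y, 0 ≤ Pb x y) (p q : (V → Fin m) × V) :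
    0 ≤ lampChain Pb m p q := by
  rw [lampChain]
  split_ifs
  · exact mul_nonneg (hPb _ _) (by positivity)
  · exact le_rfl

theorem lampChain_mem_rowStochastic (hPb : Pb ∈ rowStochastic ℝ V) :
    lampChain Pb m ∈ rowStochastic ℝ ((V → Fin m) × V) := by
  refine mem_rowStochastic_iff_sum.2
    ⟨lampChain_nonneg fun _ _ => nonneg_of_mem_rowStochastic hPb, fun ⟨f, x⟩ => ?_⟩
  simp only [Fintype.sum_prod_type_right, sum_lampChain_apply, sum_row_of_mem_rowStochastic hPb]

theorem transpose_lampChain : (lampChain Pb m)ᵀ = lampChain Pbᵀ m := by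
  ext ⟨f, x⟩ ⟨g, y⟩
  simp only [transpose_apply, lampChain_apply, mem_lampsAgreeOff, pair_comm x y, eq_comm (a := f _)]

theorem lampChain_mem_doublyStochastic (hPb : Pb ∈ doublyStochastic ℝ V) :
    lampChain Pb m ∈ doublyStochastic ℝ ((V → Fin m) × V) := by
  rw [mem_doublyStochastic_iff_mem_rowStochastic_and_mem_colStochastic] at hPb ⊢
  refine ⟨lampChain_mem_rowStochastic hPb.1, ?_⟩
  rw [← transpose_mem_rowStochastic_iff_mem_colStochastic, transpose_lampChain]
  exact lampChain_mem_rowStochastic (transpose_mem_rowStochastic_iff_mem_colStochastic.2 hPb.2)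

theorem lampChain_update_pos {x y : V} (hxy : 0 < Pb x y) (f : V → Fin m) (i : Fin m) :
    0 < lampChain Pb m (f, x) (Function.update f x i, y) := by
  have hm : (0 : ℝ) < m := Nat.cast_pos.2 i.pos
  rw [lampChain_apply, if_pos (mem_lampsAgreeOff.2 fun z hz => ?_)]
  · positivity
  · exact Function.update_of_ne (fun h => hz (by simp [h])) _ _

theorem lampChain_same_lamps_pos {x y : V} (hxy : 0 < Pb x y) (f : V → Fin m) :
    0 < lampChain Pb m (f, x) (f, y) := by
  simpa using lampChain_update_pos hxy f (f x)

theorem irred_lampChain (hPb : Pb ∈ rowStochastic ℝ V) (hirr : Irred Pb) :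
    Irred (lampChain Pb m) := by
  have hPb0 : ∀ x y, 0 ≤ Pb x y := fun _ _ => nonneg_of_mem_rowStochastic hPb
  rintro ⟨f, x⟩ ⟨g, y⟩
  rw [exists_pow_apply_pos_iff_reflTransGen (lampChain_nonneg hPb0)]
  have move (h : V → Fin m) (a b : V) :
      ReflTransGen (fun p q => 0 < lampChain Pb m p q) (h, a) (h, b) :=
    ((exists_pow_apply_pos_iff_reflTransGen hPb0).1 (hirr a b)).lift (h, ·)
      fun _ _ hab => lampChain_same_lamps_pos hab h
  have set_lamps (s : Finset V) :
      ReflTransGen (fun p q => 0 < lampChain Pb m p q) (f, x) (s.piecewise g f, y) := by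
    induction s using Finset.induction_on with
    | empty => simpa using move f x y
    | insert a s _ ih =>
      obtain ⟨b, -, hab⟩ : ∃ b ∈ univ, 0 < Pb a b :=
        exists_lt_of_sum_lt (f := 0) (by simp [sum_row_of_mem_rowStochastic hPb])
      rw [piecewise_insert]
      exact ((ih.trans (move _ y a)).tail (lampChain_update_pos hab _ _)).trans (move _ b y)
  simpa using set_lamps univ

/-- The function `(g, y) ↦ φ y` cut off to the configurations `g` that agree with `f` outside `B`.
It transfers a function `φ` of the position, supported in `B`, to the lamplighter chain. -/
noncomputable def lampLift (f : V → Fin m) (B : Finset V) (φ : V → ℝ) : (V → Fin m) × V → ℝ :=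
  fun q => if q.1 ∈ lampsAgreeOff f B then φ q.2 else 0

variable {B : Finset V} {φ : V → ℝ}

theorem lampLift_nonneg (hφ : 0 ≤ φ) (f : V → Fin m) : 0 ≤ lampLift f B φ := by
  intro q
  rw [lampLift]
  split_ifs
  exacts [hφ _, le_rfl]

theorem lampLift_le_indicator (hφB : φ ≤ (B : Set V).indicator 1) (f : V → Fin m) :
    lampLift f B φ ≤ ((lampsAgreeOff f B ×ˢ B : Finset _) : Set ((V → Fin m) × V)).indicator 1 := by
  rintro ⟨g, y⟩
  have hy := hφB y
  by_cases hg : g ∈ lampsAgreeOff f B <;> simp_all [lampLift, Set.indicator_apply]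

theorem lampChain_mulVec_lampLift (hφ : ∀ y ∉ B, φ y = 0) {f h : V → Fin m}
    (hh : h ∈ lampsAgreeOff f B) {x : V} (hx : x ∈ B) :
    (lampChain Pb m *ᵥ lampLift f B φ) (h, x) = (Pb *ᵥ φ) x := by
  have summand (g : V → Fin m) (y : V) :
      lampChain Pb m (h, x) (g, y) * lampLift f B φ (g, y) =
        lampChain Pb m (h, x) (g, y) * φ y := by
    by_cases hy : y ∈ B
    · by_cases hg : g ∈ lampsAgreeOff h {x, y}
      · have hgf : g ∈ lampsAgreeOff f B := mem_lampsAgreeOff.2 fun z hz => by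
          rw [mem_lampsAgreeOff.1 hg z (by grind), mem_lampsAgreeOff.1 hh z hz]
        rw [lampLift, if_pos hgf]
      · rw [lampChain_apply, if_neg hg, zero_mul, zero_mul]
    · simp [lampLift, hφ y hy]
  simp only [mulVec, dotProduct, Fintype.sum_prod_type_right, summand, ← sum_mul,
    sum_lampChain_apply]

theorem smul_lampLift_le (hPb : ∀ x y, 0 ≤ Pb x y) (hφ : 0 ≤ φ)
    (hφB : φ ≤ (B : Set V).indicator 1) {l : ℝ} (hl : l • φ ≤ Pb *ᵥ φ) (f : V → Fin m) :
    l • lampLift f B φ ≤ lampChain Pb m *ᵥ lampLift f B φ := by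
  have hφ_off (y : V) (hy : y ∉ B) : φ y = 0 :=
    le_antisymm (by simpa [hy] using hφB y) (hφ y)
  rintro ⟨h, x⟩
  by_cases hhx : h ∈ lampsAgreeOff f B ∧ x ∈ B
  · rw [lampChain_mulVec_lampLift hφ_off hhx.1 hhx.2]
    simpa [lampLift, hhx.1] using hl x
  · have lift_eq_zero : lampLift f B φ (h, x) = 0 := by
      rw [lampLift, ite_eq_right_iff]
      exact fun hh => hφ_off x fun hx => hhx ⟨hh, hx⟩
    rw [Pi.smul_apply, lift_eq_zero, smul_zero]
    exact dotProduct_nonneg_of_nonneg (lampChain_nonneg hPb _) (lampLift_nonneg hφ f)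

theorem sq_mul_pow_card_compl_le_one_add_chiSq (hPb : Pb ∈ rowStochastic ℝ V) (hφ : 0 ≤ φ)
    (hφB : φ ≤ (B : Set V).indicator 1) {l : ℝ} (hl0 : 0 ≤ l) (hl : l • φ ≤ Pb *ᵥ φ)
    (f : V → Fin m) (x : V) (t : ℕ) :
    (l ^ t * φ x) ^ 2 * (m : ℝ) ^ #Bᶜ ≤
      1 + chiSq ((lampChain Pb m ^ t) (f, x)) (unif ((V → Fin m) × V)) := by
  set μ := (lampChain Pb m ^ t) (f, x)
  set W := 1 + chiSq μ (unif ((V → Fin m) × V))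
  have hPb0 : ∀ x y, 0 ≤ Pb x y := fun _ _ => nonneg_of_mem_rowStochastic hPb
  have hμ : ∑ q, μ q = 1 :=
    sum_row_of_mem_rowStochastic (pow_mem (lampChain_mem_rowStochastic hPb) t) (f, x)
  have confined : l ^ t * φ x ≤ ∑ q ∈ lampsAgreeOff f B ×ˢ B, μ q := by
    simpa [lampLift, mem_lampsAgreeOff] using
      pow_mul_le_sum_pow_apply (lampChain_nonneg hPb0) hl0 (smul_lampLift_le hPb0 hφ hφB hl f)
        (lampLift_le_indicator hφB f) t (f, x)
  have hW : 0 ≤ W := by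
    rw [show W = _ from one_add_chiSq_unif hμ]
    positivity
  have hm : (0 : ℝ) < m := Nat.cast_pos.2 (f x).pos
  have hV : (0 : ℝ) < Fintype.card V := Nat.cast_pos.2 (Fintype.card_pos_iff.2 ⟨x⟩)
  have hlφ : 0 ≤ l ^ t * φ x := mul_nonneg (pow_nonneg hl0 t) (hφ x)
  refine le_of_mul_le_mul_left ?_ (show 0 < (m : ℝ) ^ #B * Fintype.card V by positivity)
  calc (m : ℝ) ^ #B * Fintype.card V * ((l ^ t * φ x) ^ 2 * (m : ℝ) ^ #Bᶜ)
      = Fintype.card ((V → Fin m) × V) * (l ^ t * φ x) ^ 2 := by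
        rw [Fintype.card_prod, Fintype.card_fun, Fintype.card_fin, ← card_add_card_compl B]
        push_cast
        ring
    _ ≤ Fintype.card ((V → Fin m) × V) * (∑ q ∈ lampsAgreeOff f B ×ˢ B, μ q) ^ 2 := by gcongr
    _ ≤ #(lampsAgreeOff f B ×ˢ B) * W := card_mul_sq_sum_le hμ _
    _ = (m : ℝ) ^ #B * #B * W := by rw [card_product, card_lampsAgreeOff]; push_cast; ring
    _ ≤ (m : ℝ) ^ #B * Fintype.card V * W := by gcongr; exact card_le_univ B

end Lamplighter

section Cycle

variable {n : ℕ}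

section Walk

variable [NeZero n]

theorem cycleWalk_nonneg (x y : ZMod n) : 0 ≤ cycleWalk n x y := by
  unfold cycleWalk
  positivity

theorem cycleWalk_self_pos (x : ZMod n) : 0 < cycleWalk n x x := by
  unfold cycleWalk
  rw [if_pos rfl]
  positivity

theorem cycleWalk_add_one_pos (x : ZMod n) : 0 < cycleWalk n x (x + 1) := by
  unfold cycleWalk
  rw [if_pos (rfl : x + 1 = x + 1)]
  positivity

theorem cycleWalk_mulVec (φ : ZMod n → ℝ) (x : ZMod n) :
    (cycleWalk n *ᵥ φ) x = φ x / 2 + φ (x + 1) / 4 + φ (x - 1) / 4 := by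
  simp only [mulVec, dotProduct, cycleWalk, add_mul, sum_add_distrib, ite_mul, zero_mul,
    sum_ite_eq', mem_univ, if_true]
  ring

theorem transpose_cycleWalk : (cycleWalk n)ᵀ = cycleWalk n := by
  ext x y
  simp only [transpose_apply, cycleWalk, eq_comm (a := x), ← sub_eq_iff_eq_add,
    eq_sub_iff_add_eq]
  ring

theorem cycleWalk_mem_rowStochastic : cycleWalk n ∈ rowStochastic ℝ (ZMod n) := by
  refine mem_rowStochastic.2 ⟨cycleWalk_nonneg, funext fun x => ?_⟩
  rw [cycleWalk_mulVec]
  norm_num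

theorem cycleWalk_mem_doublyStochastic : cycleWalk n ∈ doublyStochastic ℝ (ZMod n) := by
  refine mem_doublyStochastic_iff_mem_rowStochastic_and_mem_colStochastic.2
    ⟨cycleWalk_mem_rowStochastic, ?_⟩
  rw [← transpose_mem_rowStochastic_iff_mem_colStochastic, transpose_cycleWalk]
  exact cycleWalk_mem_rowStochastic

theorem irred_cycleWalk : Irred (cycleWalk n) := by
  intro x y
  rw [exists_pow_apply_pos_iff_reflTransGen cycleWalk_nonneg]
  have advance (j : ℕ) : ReflTransGen (fun a b => 0 < cycleWalk n a b) x (x + j) := by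
    induction j with
    | zero => simpa using ReflTransGen.refl
    | succ j ih =>
      rw [Nat.cast_succ, ← add_assoc]
      exact ih.tail (cycleWalk_add_one_pos _)
  simpa using advance (y - x).val

end Walk

/-- The vertices of the cycle at graph distance less than `L` from `x₀`. -/
noncomputable def arc [NeZero n] (L : ℕ) (x₀ : ZMod n) : Finset (ZMod n) :=
  univ.filter fun y => (y - x₀).valMinAbs.natAbs < L

theorem card_arc_le [NeZero n] (L : ℕ) (x₀ : ZMod n) : #(arc L x₀) ≤ 2 * L - 1 := by
  have arc_subset : arc L x₀ ⊆ (Ioo (-(L : ℤ)) L).image fun k : ℤ => x₀ + k := by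
    intro y hy
    have hyL : (y - x₀).valMinAbs.natAbs < L := by simpa [arc] using hy
    refine mem_image.2 ⟨(y - x₀).valMinAbs, mem_Ioo.2 (by omega), ?_⟩
    rw [ZMod.coe_valMinAbs, add_sub_cancel]
  calc #(arc L x₀) ≤ #(Ioo (-(L : ℤ)) L) := (card_le_card arc_subset).trans card_image_le
    _ = 2 * L - 1 := by rw [Int.card_Ioo]; omega

/-- The cosine profile on `arc L x₀`, equal to `1` at `x₀` and vanishing at distance `L`. Truncating
the distance at `L` extends it by zero to the whole cycle. -/
noncomputable def cosBump (L : ℕ) (x₀ y : ZMod n) : ℝ :=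
  Real.cos ((min (y - x₀).valMinAbs.natAbs L : ℕ) * (Real.pi / (2 * L)))

theorem natCast_mul_pi_div_le_pi_div_two {k L : ℕ} (hk : k ≤ L) :
    k * (Real.pi / (2 * L)) ≤ Real.pi / 2 := by
  rcases L.eq_zero_or_pos with rfl | hL
  · simpa using Real.pi_div_two_pos.le
  · calc k * (Real.pi / (2 * L)) ≤ L * (Real.pi / (2 * L)) := by gcongr
      _ = Real.pi / 2 := by field_simp

theorem cosBump_self (L : ℕ) (x₀ : ZMod n) : cosBump L x₀ x₀ = 1 := by
  simp [cosBump]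

theorem cosBump_nonneg (L : ℕ) (x₀ : ZMod n) : 0 ≤ cosBump L x₀ := fun _ =>
  Real.cos_nonneg_of_neg_pi_div_two_le_of_le
    ((neg_nonpos.2 Real.pi_div_two_pos.le).trans (by positivity))
    (natCast_mul_pi_div_le_pi_div_two (min_le_right _ _))

theorem cosBump_le_indicator_arc [NeZero n] {L : ℕ} (hL : 0 < L) (x₀ : ZMod n) :
    cosBump L x₀ ≤ (arc L x₀ : Set (ZMod n)).indicator 1 := by
  intro y
  by_cases hy : y ∈ arc L x₀
  · rw [Set.indicator_of_mem (mem_coe.2 hy)]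
    exact Real.cos_le_one _
  · have hLy : L ≤ (y - x₀).valMinAbs.natAbs := by simpa [arc] using hy
    have angle : (L : ℝ) * (Real.pi / (2 * L)) = Real.pi / 2 := by field_simp
    simp [hy, cosBump, min_eq_right hLy, angle]

theorem cos_natAbs_mul (k : ℤ) (θ : ℝ) : Real.cos (k.natAbs * θ) = Real.cos (k * θ) := by
  rcases Int.natAbs_eq k with hk | hk <;> rw [hk] <;> simp

theorem cos_le_cosBump [NeZero n] {L : ℕ} (x₀ : ZMod n) {k : ℤ} (hk : k.natAbs ≤ L) :
    Real.cos (k * (Real.pi / (2 * L))) ≤ cosBump L x₀ (x₀ + k) := by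
  have dist_le : ((k : ZMod n).valMinAbs).natAbs ≤ k.natAbs :=
    ZMod.natAbs_min_of_le_div_two n _ k (ZMod.coe_valMinAbs _) (ZMod.natAbs_valMinAbs_le _)
  rw [cosBump, add_sub_cancel_left, min_eq_left (dist_le.trans hk), ← cos_natAbs_mul]
  refine Real.cos_le_cos_of_nonneg_of_le_pi (by positivity) ?_ (by gcongr)
  exact (natCast_mul_pi_div_le_pi_div_two hk).trans (half_le_self Real.pi_pos.le)

theorem smul_cosBump_le [NeZero n] {L : ℕ} (hL : 0 < L) (x₀ : ZMod n) :
    ((1 + Real.cos (Real.pi / (2 * L))) / 2) • cosBump L x₀ ≤ cycleWalk n *ᵥ cosBump L x₀ := by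
  intro x
  set θ := Real.pi / (2 * L)
  by_cases hx : x ∈ arc L x₀
  · set k := (x - x₀).valMinAbs
    have hkL : k.natAbs < L := by simpa [arc] using hx
    have hxk : x = x₀ + k := by rw [ZMod.coe_valMinAbs, add_sub_cancel]
    have center : cosBump L x₀ x = Real.cos (k * θ) := by
      rw [cosBump, min_eq_left hkL.le, cos_natAbs_mul]
    have right : Real.cos ((k + 1) * θ) ≤ cosBump L x₀ (x + 1) := by
      simpa [← add_assoc, ← hxk] using cos_le_cosBump x₀ (k := k + 1) (L := L) (by omega)
    have left : Real.cos ((k - 1) * θ) ≤ cosBump L x₀ (x - 1) := by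
      simpa [← add_sub_assoc, ← hxk] using cos_le_cosBump x₀ (k := k - 1) (L := L) (by omega)
    rw [add_mul, one_mul, Real.cos_add] at right
    rw [sub_mul, one_mul, Real.cos_sub] at left
    rw [Pi.smul_apply, smul_eq_mul, cycleWalk_mulVec, center]
    linarith
  · have bump_eq_zero : cosBump L x₀ x = 0 :=
      le_antisymm (by simpa [hx] using cosBump_le_indicator_arc hL x₀ x) (cosBump_nonneg L x₀ x)
    rw [Pi.smul_apply, bump_eq_zero, smul_zero]
    exact dotProduct_nonneg_of_nonneg (cycleWalk_nonneg x) (cosBump_nonneg L x₀)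

end Cycle

section RealInequalities

theorem exp_neg_two_mul_le_one_sub {u : ℝ} (hu0 : 0 ≤ u) (hu : u ≤ 1 / 2) :
    Real.exp (-(2 * u)) ≤ 1 - u := by
  rw [Real.exp_neg]
  refine inv_le_of_inv_le₀ (by linarith) (le_trans ?_ (Real.add_one_le_exp _))
  rw [inv_le_iff_one_le_mul₀ (by linarith)]
  nlinarith

theorem exp_neg_sq_div_two_le_one_add_cos_div_two {θ : ℝ} (hθ : 0 ≤ Real.cos θ) :
    Real.exp (-(θ ^ 2 / 2)) ≤ (1 + Real.cos θ) / 2 :=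
  calc Real.exp (-(θ ^ 2 / 2)) ≤ Real.exp (-(2 * ((1 - Real.cos θ) / 2))) := by
        have := Real.one_sub_sq_div_two_le_cos (x := θ)
        gcongr
        linarith
    _ ≤ 1 - (1 - Real.cos θ) / 2 :=
        exp_neg_two_mul_le_one_sub (by linarith [Real.cos_le_one θ]) (by linarith)
    _ = (1 + Real.cos θ) / 2 := by ring

theorem mul_sq_mul_log_pow_le_of_exp_mul_rpow_le {c T : ℝ} {n m : ℕ} (hc : 0 < c) (hn : 2 ≤ n)
    (hm : 2 ≤ m)
    (h : Real.exp (-(c * (T / (n : ℝ) ^ 2))) * (m : ℝ) ^ ((n : ℝ) / 2) ≤ 1 + 1 / 16) :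
    (4 * c)⁻¹ * (n : ℝ) ^ 2 * Real.log ((m : ℝ) ^ n) ≤ T := by
  have hm0 : (0 : ℝ) < m := by positivity
  have hn0 : (0 : ℝ) < n := by positivity
  have one_le_log : 1 ≤ Real.log ((m : ℝ) ^ n) :=
    calc (1 : ℝ) ≤ 2 * Real.log 2 := by linarith [Real.log_two_gt_d9]
      _ ≤ n * Real.log m := by gcongr <;> exact_mod_cast ‹_›
      _ = Real.log ((m : ℝ) ^ n) := (Real.log_pow _ _).symm
  have log_sub_le : Real.log ((m : ℝ) ^ n) / 2 - c * (T / (n : ℝ) ^ 2) ≤ 1 / 16 := by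
    rw [Real.rpow_def_of_pos hm0, ← Real.exp_add] at h
    have := (Real.add_one_le_exp _).trans h
    rw [Real.log_pow]
    linarith
  have log_le : Real.log ((m : ℝ) ^ n) ≤ 4 * c * (T / (n : ℝ) ^ 2) := by linarith
  calc (4 * c)⁻¹ * (n : ℝ) ^ 2 * Real.log ((m : ℝ) ^ n)
      ≤ (4 * c)⁻¹ * (n : ℝ) ^ 2 * (4 * c * (T / (n : ℝ) ^ 2)) := by gcongr
    _ = T := by field_simp

end RealInequalities

section LamplighterOnCycle

variable {n m : ℕ} [NeZero n]

theorem isPrimitive_lampChain_cycleWalk : (lampChain (cycleWalk n) m).IsPrimitive :=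
  (irred_lampChain cycleWalk_mem_rowStochastic irred_cycleWalk).isPrimitive
    (lampChain_nonneg cycleWalk_nonneg)
    fun ⟨f, x⟩ => lampChain_same_lamps_pos (cycleWalk_self_pos x) f

theorem exp_mul_pow_card_compl_arc_le {L : ℕ} (hL : 0 < L) (f : ZMod n → Fin m) (x₀ : ZMod n)
    (t : ℕ) :
    Real.exp (-((Real.pi / (2 * L)) ^ 2 * t)) * (m : ℝ) ^ #(arc L x₀)ᶜ ≤
      1 + chiSq ((lampChain (cycleWalk n) m ^ t) (f, x₀)) (unif ((ZMod n → Fin m) × ZMod n)) := by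
  set θ := Real.pi / (2 * L)
  have hcos : 0 ≤ Real.cos θ :=
    Real.cos_nonneg_of_neg_pi_div_two_le_of_le
      ((neg_nonpos.2 Real.pi_div_two_pos.le).trans (by positivity))
      (by simpa using natCast_mul_pi_div_le_pi_div_two (Nat.succ_le_of_lt hL))
  have hl : Real.exp (-(θ ^ 2 / 2)) ≤ (1 + Real.cos θ) / 2 :=
    exp_neg_sq_div_two_le_one_add_cos_div_two hcos
  calc Real.exp (-(θ ^ 2 * t)) * (m : ℝ) ^ #(arc L x₀)ᶜ
      = (Real.exp (-(θ ^ 2 / 2)) ^ t) ^ 2 * (m : ℝ) ^ #(arc L x₀)ᶜ := by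
        rw [← pow_mul, ← Real.exp_nat_mul]
        push_cast
        ring_nf
    _ ≤ (((1 + Real.cos θ) / 2) ^ t * cosBump L x₀ x₀) ^ 2 * (m : ℝ) ^ #(arc L x₀)ᶜ := by
        rw [cosBump_self, mul_one]
        gcongr
    _ ≤ _ := sq_mul_pow_card_compl_le_one_add_chiSq cycleWalk_mem_rowStochastic
        (cosBump_nonneg L x₀) (cosBump_le_indicator_arc hL x₀) (by positivity)
        (smul_cosBump_le hL x₀) f x₀ t

theorem exp_mul_rpow_le_one_add_chiSq (hn : 2 ≤ n) (f : ZMod n → Fin m) (x₀ : ZMod n) (t : ℕ) :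
    Real.exp (-((5 * Real.pi / 2) ^ 2 * (t / (n : ℝ) ^ 2))) * (m : ℝ) ^ ((n : ℝ) / 2) ≤
      1 + chiSq ((lampChain (cycleWalk n) m ^ t) (f, x₀)) (unif ((ZMod n → Fin m) × ZMod n)) := by
  -- The largest `L` for which `arc L x₀` has at most `n / 2` vertices.
  obtain ⟨L, hLdef⟩ : ∃ L, L = (n + 2) / 4 := ⟨_, rfl⟩
  have hL : 0 < L := by omega
  have hm : (1 : ℝ) ≤ m := Nat.one_le_cast.2 (f x₀).pos
  have rate_le : Real.pi / (2 * L) ≤ 5 * Real.pi / 2 / n := by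
    have hnL : (n : ℝ) ≤ 5 * L := by exact_mod_cast (by omega : n ≤ 5 * L)
    rw [div_div, div_le_div_iff₀ (by positivity) (by positivity)]
    nlinarith [Real.pi_pos]
  have half_le_card : (n : ℝ) / 2 ≤ #(arc L x₀)ᶜ := by
    have card_arc := card_arc_le L x₀
    have card_add := card_add_card_compl (arc L x₀)
    rw [ZMod.card] at card_add
    rw [div_le_iff₀ two_pos]
    exact_mod_cast (by omega : n ≤ #(arc L x₀)ᶜ * 2)
  refine le_trans ?_ (exp_mul_pow_card_compl_arc_le hL f x₀ t)
  refine mul_le_mul (Real.exp_le_exp.2 (neg_le_neg ?_))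
    ((Real.rpow_le_rpow_of_exponent_le hm half_le_card).trans_eq (Real.rpow_natCast _ _))
    (by positivity) (by positivity)
  calc (Real.pi / (2 * L)) ^ 2 * t ≤ (5 * Real.pi / 2 / n) ^ 2 * t := by gcongr
    _ = (5 * Real.pi / 2) ^ 2 * (t / (n : ℝ) ^ 2) := by ring

end LamplighterOnCycle

/-- For the `m`-state lamplighter chain on the cycle `Z_n` started
with all lamps `0` and the lamplighter at `x₀`: there is an absolute `c > 0` such
that at any time `t = a n²`, `1 + Var_π(μ_t/π) ≥ exp(-c a) m^(n/2)`; consequently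
`τ₂ = Ω(n² log N)` with `N = mⁿ`. -/
theorem lamplighter_cycle_L2_lower :
    ∃ c c' : ℝ, 0 < c ∧ 0 < c' ∧
      ∀ (n m : ℕ) [NeZero n] (hn : 2 ≤ n) (hm : 2 ≤ m) (x₀ : ZMod n),
        (∀ t : ℕ,
          Real.exp (-(c * ((t : ℝ) / (n : ℝ) ^ 2))) * (m : ℝ) ^ ((n : ℝ) / 2) ≤
            1 + ∑ q : (ZMod n → Fin m) × ZMod n,
              unif ((ZMod n → Fin m) × ZMod n) q *
                (((lampChain (cycleWalk n) m ^ t) ((fun _ => ⟨0, by omega⟩), x₀) q) /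
                    unif ((ZMod n → Fin m) × ZMod n) q - 1) ^ 2) ∧
        c' * (n : ℝ) ^ 2 * Real.log ((m : ℝ) ^ n) ≤
          (tau2 (lampChain (cycleWalk n) m) (unif ((ZMod n → Fin m) × ZMod n)) : ℝ) := by
  refine ⟨(5 * Real.pi / 2) ^ 2, (4 * (5 * Real.pi / 2) ^ 2)⁻¹, by positivity, by positivity, ?_⟩
  intro n m _ hn hm x₀
  let dark : ZMod n → Fin m := fun _ => ⟨0, by omega⟩
  refine ⟨fun t => exp_mul_rpow_le_one_add_chiSq hn dark x₀ t, ?_⟩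
  have mixed : chiSq ((lampChain (cycleWalk n) m ^ tau2 (lampChain (cycleWalk n) m) (unif _))
      (dark, x₀)) (unif _) ≤ 1 / 16 :=
    chiSq_pow_tau2_le (lampChain_mem_doublyStochastic cycleWalk_mem_doublyStochastic)
      isPrimitive_lampChain_cycleWalk (dark, x₀)
  exact mul_sq_mul_log_pow_le_of_exp_mul_rpow_le (by positivity) hn hm
    ((exp_mul_rpow_le_one_add_chiSq hn dark x₀ _).trans (by gcongr))

end Paper
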